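/- arXiv:1605.08115 — 10 statements merged into one kernel-verified Lean document; each statement's English description precedes it below -/
import Mathlib

section
/- Let L be a right Leibniz algebra over a field of characteristic ≠ 2, and suppose L is right nilpotent of index n, i.e. L^n = 0 where L^1 = L and L^{k+1} = span{bc : b ∈ L^k, c ∈ L}. Then L is strongly nilpotent of index at most 4n² − 2n + 1; that is, every product of 4n² − 2n + 1 (or more) elements of L, parenthesized in an arbitrary way, is zero. -/
open Classical

/-- The binary product `mul` is bilinear over `F`. -/
def IsBilin (F : Type*) [Field F] {L : Type*} [AddCommGroup L] [Module F L]
    (mul : L → L → L) : Prop :=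
  (∀ a b c : L, mul (a + b) c = mul a c + mul b c) ∧
  (∀ a b c : L, mul a (b + c) = mul a b + mul a c) ∧
  (∀ (r : F) (a b : L), mul (r • a) b = r • mul a b) ∧
  (∀ (r : F) (a b : L), mul a (r • b) = r • mul a b)

/-- The (right) Leibniz identity: `a(bc) = (ab)c - (ac)b`. -/
def IsRightLeibniz {L : Type*} [AddCommGroup L] (mul : L → L → L) : Prop :=
  ∀ a b c : L, mul a (mul b c) = mul (mul a b) c - mul (mul a c) b

/-- The left Leibniz identity: `a(bc) = (ab)c + b(ac)`. -/
def IsLeftLeibniz {L : Type*} [AddCommGroup L] (mul : L → L → L) : Prop :=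
  ∀ a b c : L, mul a (mul b c) = mul (mul a b) c + mul b (mul a c)

/-- `B` is a two-sided ideal: `xb ∈ B` and `bx ∈ B` for all `x ∈ L`, `b ∈ B`. -/
def IsIdeal {F : Type*} [Field F] {L : Type*} [AddCommGroup L] [Module F L]
    (mul : L → L → L) (B : Submodule F L) : Prop :=
  ∀ (x b : L), b ∈ B → mul x b ∈ B ∧ mul b x ∈ B

/-- `Ess F mul`: the two-sided ideal of `L` generated by the squares `{xx : x ∈ L}`. -/
def Ess (F : Type*) [Field F] {L : Type*} [AddCommGroup L] [Module F L]
    (mul : L → L → L) : Submodule F L :=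
  sInf {I : Submodule F L | (∀ x : L, mul x x ∈ I) ∧ IsIdeal mul I}

/-- The two-sided ideal of `L` generated by a subspace `S`. -/
def idealClosure (F : Type*) [Field F] {L : Type*} [AddCommGroup L] [Module F L]
    (mul : L → L → L) (S : Submodule F L) : Submodule F L :=
  sInf {I : Submodule F L | S ≤ I ∧ IsIdeal mul I}

/-- Right powers: `B^0 = L` (convention), `B^1 = B`,
`B^{n+1} = span {bc : b ∈ B^n, c ∈ B}`. -/
def rpow (F : Type*) [Field F] {L : Type*} [AddCommGroup L] [Module F L]
    (mul : L → L → L) (B : Submodule F L) : ℕ → Submodule F L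
  | 0 => ⊤
  | 1 => B
  | n + 2 => Submodule.span F
      {x : L | ∃ b ∈ rpow F mul B (n + 1), ∃ c ∈ B, x = mul b c}

/-- Left powers: `^0B = L` (convention), `^1B = B`,
`^{n+1}B = span {bc : b ∈ B, c ∈ ^nB}`. -/
def lpow (F : Type*) [Field F] {L : Type*} [AddCommGroup L] [Module F L]
    (mul : L → L → L) (B : Submodule F L) : ℕ → Submodule F L
  | 0 => ⊤
  | 1 => B
  | n + 2 => Submodule.span F
      {x : L | ∃ b ∈ B, ∃ c ∈ lpow F mul B (n + 1), x = mul b c}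

/-- The right-normed product `rightProd mul a [b₁, …, bₖ] = ((…(a b₁)…) bₖ)`,
with all parentheses associated to the left. -/
def rightProd {L : Type*} (mul : L → L → L) : L → List L → L
  | a, [] => a
  | a, b :: l => rightProd mul (mul a b) l

/-- `D_{(L,k)}`: the span of all right-normed products `d a_k ⋯ a_1`
with `d ∈ D` and `a_i ∈ L`. -/
def rightMulSpan (F : Type*) [Field F] {L : Type*} [AddCommGroup L] [Module F L]
    (mul : L → L → L) (D : Submodule F L) (k : ℕ) : Submodule F L :=
  Submodule.span F
    {x : L | ∃ d ∈ D, ∃ l : List L, l.length = k ∧ x = rightProd mul d l}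

/-- A formal nonassociative product (a word of elements of `L` parenthesized
in an arbitrary way). -/
inductive PTree (L : Type*) where
  | leaf : L → PTree L
  | node : PTree L → PTree L → PTree L

/-- Evaluation of a parenthesized product in `L`. -/
def PTree.eval {L : Type*} (mul : L → L → L) : PTree L → L
  | .leaf a => a
  | .node s t => mul (PTree.eval mul s) (PTree.eval mul t)

/-- The list of factors of a parenthesized product, in order. -/
def PTree.leaves {L : Type*} : PTree L → List L
  | .leaf a => [a]
  | .node s t => s.leaves ++ t.leaves

/-- The length (number of factors) of a parenthesized product. -/
def PTree.length {L : Type*} (t : PTree L) : ℕ := t.leaves.length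

/-- The weight of a parenthesized product with respect to `B`:
the number of its factors lying in `B`. -/
noncomputable def PTree.weight {F : Type*} [Field F] {L : Type*} [AddCommGroup L]
    [Module F L] (B : Submodule F L) (t : PTree L) : ℕ :=
  t.leaves.countP (fun y => decide (y ∈ B))

/-- `B^{⟨n⟩}`: the span of all products of elements of `L` of weight at least `n`
with respect to `B`. -/
noncomputable def weightSpan (F : Type*) [Field F] {L : Type*} [AddCommGroup L]
    [Module F L] (mul : L → L → L) (B : Submodule F L) (n : ℕ) : Submodule F L :=
  Submodule.span F
    {x : L | ∃ t : PTree L, n ≤ PTree.weight B t ∧ x = PTree.eval mul t}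

/-- `B^{{n}}`: the span of all length-`n` products all of whose factors lie in `B`. -/
def lengthSpanIn (F : Type*) [Field F] {L : Type*} [AddCommGroup L] [Module F L]
    (mul : L → L → L) (B : Submodule F L) (n : ℕ) : Submodule F L :=
  Submodule.span F
    {x : L | ∃ t : PTree L, PTree.length t = n ∧ (∀ a ∈ PTree.leaves t, a ∈ B) ∧
      x = PTree.eval mul t}

theorem aux_mul_mem {F : Type*} [Field F] {L : Type*} [AddCommGroup L] [Module F L]
    (mul : L → L → L) (hbil : IsBilin F mul) (hleib : IsRightLeibniz mul) (j : ℕ) :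
    ∀ (i : ℕ) (a b : L), a ∈ rpow F mul (⊤ : Submodule F L) (i + 1) →
      b ∈ rpow F mul (⊤ : Submodule F L) (j + 1) →
      mul a b ∈ rpow F mul (⊤ : Submodule F L) (i + j + 2) := by
  have base : ∀ (i : ℕ) (a b : L), a ∈ rpow F mul (⊤ : Submodule F L) (i + 1) →
      mul a b ∈ rpow F mul (⊤ : Submodule F L) (i + 2) := by
    intro i a b ha
    exact Submodule.subset_span ⟨a, ha, b, Submodule.mem_top, rfl⟩
  obtain ⟨_, hadd, _, hsmul⟩ := hbil
  induction j with
  | zero => intro i a b ha _; exact base i a b ha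
  | succ j ih =>
    intro i a b ha hb
    have hb' : b ∈ Submodule.span F {x : L | ∃ b ∈ rpow F mul (⊤ : Submodule F L) (j + 1),
      ∃ c ∈ (⊤ : Submodule F L), x = mul b c} := hb
    clear hb
    induction hb' using Submodule.span_induction with
    | mem x hx =>
      obtain ⟨b, hb, c, _, rfl⟩ := hx
      rw [hleib]
      refine Submodule.sub_mem _ ?_ ?_
      · exact base (i + j + 1) _ _ (ih i a b ha hb)
      · have h := ih (i + 1) _ b (base i a c ha) hb
        rwa [show i + 1 + j + 2 = i + (j + 1) + 2 by omega] at h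
    | zero =>
      have h := hsmul 0 a 0
      rw [zero_smul, zero_smul] at h
      rw [h]; exact Submodule.zero_mem _
    | add x y _ _ hx hy => rw [hadd]; exact Submodule.add_mem _ hx hy
    | smul r x _ hx => rw [hsmul]; exact Submodule.smul_mem _ r hx

theorem aux_tree {F : Type*} [Field F] {L : Type*} [AddCommGroup L] [Module F L]
    (mul : L → L → L) (hbil : IsBilin F mul) (hleib : IsRightLeibniz mul) (t : PTree L) :
    ∃ k, PTree.length t = k + 1 ∧
      PTree.eval mul t ∈ rpow F mul (⊤ : Submodule F L) (k + 1) := by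
  induction t with
  | leaf a => exact ⟨0, rfl, Submodule.mem_top⟩
  | node s t hs ht =>
    obtain ⟨k, hk, hs⟩ := hs
    obtain ⟨l, hl, ht⟩ := ht
    refine ⟨k + l + 1, ?_, aux_mul_mem mul hbil hleib l k _ _ hs ht⟩
    simp only [PTree.length, PTree.leaves, List.length_append] at *
    omega

theorem aux_zero {F : Type*} [Field F] {L : Type*} [AddCommGroup L] [Module F L]
    (mul : L → L → L) (hbil : IsBilin F mul) (n : ℕ)
    (hnil : rpow F mul (⊤ : Submodule F L) (n + 1) = ⊥) (d : ℕ) :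
    rpow F mul (⊤ : Submodule F L) (n + d + 1) = ⊥ := by
  induction d with
  | zero => exact hnil
  | succ d ih =>
    change Submodule.span F {x : L | ∃ b ∈ rpow F mul (⊤ : Submodule F L) (n + d + 1),
      ∃ c ∈ (⊤ : Submodule F L), x = mul b c} = ⊥
    rw [Submodule.span_eq_bot]
    rintro x ⟨b, hb, c, _, rfl⟩
    rw [ih, Submodule.mem_bot] at hb
    have h := hbil.2.2.1 0 0 c
    rw [zero_smul, zero_smul] at h
    rw [hb, h]

/-- A right Leibniz algebra that is right nilpotent of index `n`
is strongly nilpotent of index at most `4n² - 2n + 1`. -/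
theorem right_nilpotent_implies_strongly_nilpotent
    {F : Type*} [Field F] {L : Type*} [AddCommGroup L] [Module F L]
    (h2 : (2 : F) ≠ 0) (mul : L → L → L)
    (hbil : IsBilin F mul) (hleib : IsRightLeibniz mul)
    (n : ℕ) (hn : 1 ≤ n) (hnil : rpow F mul (⊤ : Submodule F L) n = ⊥) :
    ∀ t : PTree L, 4 * n ^ 2 - 2 * n + 1 ≤ PTree.length t →
      PTree.eval mul t = 0 := by
  intro t ht
  obtain ⟨k, hk, hm⟩ := aux_tree mul hbil hleib t
  obtain ⟨m, rfl⟩ : ∃ m, n = m + 1 := ⟨n - 1, by omega⟩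
  have h1 : m + 1 ≤ 4 * (m + 1) ^ 2 - 2 * (m + 1) + 1 := by
    have : 3 * (m + 1) ≤ 4 * (m + 1) ^ 2 := by nlinarith
    omega
  obtain ⟨d, rfl⟩ : ∃ d, k = m + d := ⟨k - m, by omega⟩
  rw [aux_zero mul hbil m hnil d] at hm
  simpa using hm
end

section
/- Let L be a left Leibniz algebra over a field of characteristic ≠ 2, and suppose L is left nilpotent of index n, i.e. ^nL = 0 where ^1L = L and ^{k+1}L = span{bc : b ∈ L, c ∈ ^kL}. Then L is strongly nilpotent of index at most 4n² − 2n + 1; that is, every product of 4n² − 2n + 1 (or more) elements of L, parenthesized in an arbitrary way, is zero. -/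
open Classical

theorem aux_mul_mem_s1 {F : Type*} [Field F] {L : Type*} [AddCommGroup L] [Module F L]
    (mul : L → L → L) (hleib : IsLeftLeibniz mul) (t : PTree L) :
    ∀ (k : ℕ) (x : L), x ∈ lpow F mul (⊤ : Submodule F L) (k + 1) →
      mul (t.eval mul) x ∈ lpow F mul (⊤ : Submodule F L) (k + t.length + 1) := by
  induction t with
  | leaf a =>
    intro k x hx
    exact Submodule.subset_span ⟨a, trivial, x, hx, rfl⟩
  | node s t ihs iht =>
    intro k x hx
    have hl : (PTree.node s t).length = s.length + t.length := by
      simp [PTree.length, PTree.leaves]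
    have h1 := ihs _ _ (iht k x hx)
    have h2 := iht _ _ (ihs k x hx)
    have e : mul (PTree.eval mul (PTree.node s t)) x
        = mul (s.eval mul) (mul (t.eval mul) x) - mul (t.eval mul) (mul (s.eval mul) x) := by
      rw [hleib (s.eval mul) (t.eval mul) x]
      simp [PTree.eval]
    rw [e, hl]
    refine Submodule.sub_mem _ ?_ ?_
    · rwa [show k + (s.length + t.length) + 1 = k + t.length + s.length + 1 by omega]
    · rwa [show k + (s.length + t.length) + 1 = k + s.length + t.length + 1 by omega]

theorem aux_length_pos {L : Type*} (t : PTree L) : 1 ≤ t.length := by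
  induction t with
  | leaf a => simp [PTree.length, PTree.leaves]
  | node s t ihs iht =>
    simp only [PTree.length, PTree.leaves, List.length_append] at *
    omega

theorem aux_eval_mem {F : Type*} [Field F] {L : Type*} [AddCommGroup L] [Module F L]
    (mul : L → L → L) (hleib : IsLeftLeibniz mul) (t : PTree L) :
    t.eval mul ∈ lpow F mul (⊤ : Submodule F L) t.length := by
  induction t with
  | leaf a => exact Submodule.mem_top
  | node s t ihs iht =>
    have hl : (PTree.node s t).length = s.length + t.length := by
      simp [PTree.length, PTree.leaves]
    have hp := aux_length_pos t
    obtain ⟨k, hk⟩ : ∃ k, t.length = k + 1 := ⟨t.length - 1, by omega⟩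
    rw [hk] at iht
    have := aux_mul_mem_s1 (F := F) mul hleib s k _ iht
    rw [hl, hk, show s.length + (k + 1) = k + s.length + 1 by omega]
    exact this

theorem aux_lpow_bot {F : Type*} [Field F] {L : Type*} [AddCommGroup L] [Module F L]
    (mul : L → L → L) (hbil : IsBilin F mul) (n : ℕ)
    (hnil : lpow F mul (⊤ : Submodule F L) (n + 1) = ⊥) (k : ℕ) :
    lpow F mul (⊤ : Submodule F L) (n + k + 1) = ⊥ := by
  induction k with
  | zero => exact hnil
  | succ k ih =>
    change Submodule.span F
      {x : L | ∃ b ∈ (⊤ : Submodule F L), ∃ c ∈ lpow F mul ⊤ (n + k + 1), x = mul b c} = ⊥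
    rw [Submodule.span_eq_bot]
    rintro x ⟨b, -, c, hc, rfl⟩
    rw [ih, Submodule.mem_bot] at hc
    have := hbil.2.2.2 0 b 0
    simpa [hc] using this

/-- A left Leibniz algebra that is left nilpotent of index `n`
is strongly nilpotent of index at most `4n² - 2n + 1`. -/
theorem left_nilpotent_implies_strongly_nilpotent
    {F : Type*} [Field F] {L : Type*} [AddCommGroup L] [Module F L]
    (h2 : (2 : F) ≠ 0) (mul : L → L → L)
    (hbil : IsBilin F mul) (hleib : IsLeftLeibniz mul)
    (n : ℕ) (hn : 1 ≤ n) (hnil : lpow F mul (⊤ : Submodule F L) n = ⊥) :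
    ∀ t : PTree L, 4 * n ^ 2 - 2 * n + 1 ≤ PTree.length t →
      PTree.eval mul t = 0 := by
  intro t ht
  have hm := aux_eval_mem (F := F) mul hleib t
  have hle : n ≤ t.length := by
    have : 3 * n ≤ 4 * n ^ 2 := by nlinarith
    omega
  obtain ⟨m, rfl⟩ : ∃ m, n = m + 1 := ⟨n - 1, by omega⟩
  obtain ⟨k, hk⟩ := Nat.exists_eq_add_of_le hle
  rw [hk, show m + 1 + k = m + k + 1 by omega, aux_lpow_bot mul hbil m hnil k] at hm
  simpa using hm
end

section
/- Let L be a right Leibniz algebra over a field of characteristic ≠ 2 and B a two-sided ideal of L. Then for every integer n ≥ 1, B^n ⊆ (^nB) + Es(B), where B^n is the n-th right power of B, ^nB is the n-th left power of B, and Es(B) = B ∩ Ess(L). -/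
open Classical

/-- For an ideal `B` of a right Leibniz algebra,
`B^n ⊆ (^nB) + Es(B)` for all `n ≥ 1`. -/
theorem rpow_le_lpow_sup_Es
    {F : Type*} [Field F] {L : Type*} [AddCommGroup L] [Module F L]
    (h2 : (2 : F) ≠ 0) (mul : L → L → L)
    (hbil : IsBilin F mul) (hleib : IsRightLeibniz mul)
    (B : Submodule F L) (hB : IsIdeal mul B) :
    ∀ n : ℕ, 1 ≤ n → rpow F mul B n ≤ lpow F mul B n ⊔ (B ⊓ Ess F mul) := by
  obtain ⟨hal, har, hsl, hsr⟩ := hbil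
  have sqE : ∀ x : L, mul x x ∈ Ess F mul := fun x =>
    Submodule.mem_sInf.2 fun I hI => hI.1 x
  have hE : ∀ x b : L, b ∈ Ess F mul → mul b x ∈ Ess F mul := fun x b hb =>
    Submodule.mem_sInf.2 fun I hI => (hI.2 x b (Submodule.mem_sInf.1 hb I hI)).2
  have symE : ∀ x y : L, mul x y + mul y x ∈ Ess F mul := by
    intro x y
    have h := Submodule.sub_mem _ (Submodule.sub_mem _ (sqE (x + y)) (sqE x)) (sqE y)
    have e : mul (x + y) (x + y) - mul x x - mul y y = mul x y + mul y x := by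
      rw [hal, har, har]; abel
    rwa [e] at h
  intro n hn
  obtain ⟨m, rfl⟩ : ∃ m, n = m + 1 := ⟨n - 1, by omega⟩
  clear hn
  induction m with
  | zero => exact le_sup_left
  | succ m ih =>
    have ih' : rpow F mul B (m + 1) ≤ lpow F mul B (m + 1) ⊔ (B ⊓ Ess F mul) := ih
    change Submodule.span F {x : L | ∃ b ∈ rpow F mul B (m + 1), ∃ c ∈ B, x = mul b c} ≤
      Submodule.span F {x : L | ∃ b ∈ B, ∃ c ∈ lpow F mul B (m + 1), x = mul b c} ⊔ _
    rw [Submodule.span_le]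
    rintro x ⟨b, hb, c, hc, rfl⟩
    obtain ⟨u, hu, v, hv, rfl⟩ := Submodule.mem_sup.1 (ih' hb)
    refine Submodule.mem_sup.2 ⟨-mul c u, Submodule.neg_mem _
      (Submodule.subset_span ⟨c, hc, u, hu, rfl⟩), (mul u c + mul c u) + mul v c, ?_, ?_⟩
    · refine Submodule.add_mem _ ⟨?_, symE u c⟩ ⟨(hB v c hc).1, hE c v hv.2⟩
      exact B.add_mem (hB u c hc).1 (hB u c hc).2
    · rw [hal]; abel
end

section
/- Let L be a right Leibniz algebra over a field of characteristic ≠ 2 and B a two-sided ideal of L. Define B_0 = L, B_1 = B, and B_k = B^k + Es(B) for every integer k ≥ 2, where B^k is the k-th right power of B and Es(B) = B ∩ Ess(L). Then for every k ≥ 0, B_k is a two-sided ideal of L, and B_k ⊇ B_{k+1}. -/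
open Classical

/-- The sequence `B_0 = L`, `B_1 = B`, `B_k = B^k + Es(B)` for `k ≥ 2`. -/
def Bseq (F : Type*) [Field F] {L : Type*} [AddCommGroup L] [Module F L]
    (mul : L → L → L) (B : Submodule F L) : ℕ → Submodule F L
  | 0 => ⊤
  | 1 => B
  | k + 2 => rpow F mul B (k + 2) ⊔ (B ⊓ Ess F mul)

theorem aux_Ess_ideal {F : Type*} [Field F] {L : Type*} [AddCommGroup L] [Module F L]
    (mul : L → L → L) : IsIdeal mul (Ess F mul) := by
  intro x b hb
  unfold Ess at *
  rw [Submodule.mem_sInf] at hb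
  constructor
  · rw [Submodule.mem_sInf]
    intro I hI
    exact (hI.2 x b (hb I hI)).1
  · rw [Submodule.mem_sInf]
    intro I hI
    exact (hI.2 x b (hb I hI)).2

theorem aux_Ess_sq {F : Type*} [Field F] {L : Type*} [AddCommGroup L] [Module F L]
    (mul : L → L → L) (x : L) : mul x x ∈ Ess F mul := by
  unfold Ess
  rw [Submodule.mem_sInf]
  intro I hI
  exact hI.1 x

theorem aux_Ess_anti {F : Type*} [Field F] {L : Type*} [AddCommGroup L] [Module F L]
    (mul : L → L → L) (hbil : IsBilin F mul) (x y : L) :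
    mul x y + mul y x ∈ Ess F mul := by
  obtain ⟨h1, h2, -, -⟩ := hbil
  have h := Submodule.sub_mem _ (Submodule.sub_mem _ (aux_Ess_sq (F := F) mul (x + y))
    (aux_Ess_sq (F := F) mul x)) (aux_Ess_sq (F := F) mul y)
  have e : mul x y + mul y x = mul (x + y) (x + y) - mul x x - mul y y := by
    rw [h1, h2, h2]; abel
  rw [e]; exact h

theorem aux_rpow_right {F : Type*} [Field F] {L : Type*} [AddCommGroup L] [Module F L]
    (mul : L → L → L) (hbil : IsBilin F mul) (hleib : IsRightLeibniz mul)
    (B : Submodule F L) (hB : IsIdeal mul B) (n : ℕ) :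
    ∀ x b : L, b ∈ rpow F mul B (n + 1) → mul b x ∈ rpow F mul B (n + 1) := by
  induction n with
  | zero => intro x b hb; exact (hB x b hb).2
  | succ n ih =>
    intro x b hb
    obtain ⟨h1, h2, h3, h4⟩ := hbil
    change b ∈ Submodule.span F _ at hb
    change _ ∈ Submodule.span F _
    induction hb using Submodule.span_induction with
    | mem y hy =>
      obtain ⟨b, hb, c, hc, rfl⟩ := hy
      have e : mul (mul b c) x = mul b (mul c x) + mul (mul b x) c := by
        rw [hleib]; abel
      rw [e]
      exact Submodule.add_mem _
        (Submodule.subset_span ⟨b, hb, _, (hB x c hc).2, rfl⟩)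
        (Submodule.subset_span ⟨_, ih x b hb, c, hc, rfl⟩)
    | zero =>
      have : mul 0 x = 0 := by simpa using h3 0 0 x
      rw [this]; exact Submodule.zero_mem _
    | add y z _ _ hy hz => rw [h1]; exact Submodule.add_mem _ hy hz
    | smul r y _ hy => rw [h3]; exact Submodule.smul_mem _ _ hy

theorem aux_rpow_succ {F : Type*} [Field F] {L : Type*} [AddCommGroup L] [Module F L]
    (mul : L → L → L) (hbil : IsBilin F mul) (hleib : IsRightLeibniz mul)
    (B : Submodule F L) (hB : IsIdeal mul B) (n : ℕ) :
    rpow F mul B (n + 2) ≤ rpow F mul B (n + 1) := by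
  change Submodule.span F _ ≤ _
  rw [Submodule.span_le]
  rintro _ ⟨b, hb, c, -, rfl⟩
  exact aux_rpow_right mul hbil hleib B hB n c b hb

theorem aux_rpow_le {F : Type*} [Field F] {L : Type*} [AddCommGroup L] [Module F L]
    (mul : L → L → L) (hbil : IsBilin F mul) (hleib : IsRightLeibniz mul)
    (B : Submodule F L) (hB : IsIdeal mul B) (n : ℕ) :
    rpow F mul B (n + 1) ≤ B := by
  induction n with
  | zero => exact le_refl B
  | succ n ih => exact (aux_rpow_succ mul hbil hleib B hB n).trans ih

/-- Each `B_k` is a two-sided ideal of `L` and `B_k ⊇ B_{k+1}`. -/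
theorem Bseq_isIdeal_antitone
    {F : Type*} [Field F] {L : Type*} [AddCommGroup L] [Module F L]
    (h2 : (2 : F) ≠ 0) (mul : L → L → L)
    (hbil : IsBilin F mul) (hleib : IsRightLeibniz mul)
    (B : Submodule F L) (hB : IsIdeal mul B) :
    ∀ k : ℕ, IsIdeal mul (Bseq F mul B k) ∧
      Bseq F mul B (k + 1) ≤ Bseq F mul B k := by
  intro k
  match k with
  | 0 => exact ⟨fun _ _ _ => ⟨Submodule.mem_top, Submodule.mem_top⟩, le_top⟩
  | 1 => exact ⟨hB, sup_le (aux_rpow_le mul hbil hleib B hB 1) inf_le_left⟩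
  | k + 2 =>
    refine ⟨?_, sup_le_sup_right (aux_rpow_succ mul hbil hleib B hB (k + 1)) _⟩
    intro x b hb
    change b ∈ rpow F mul B (k + 2) ⊔ (B ⊓ Ess F mul) at hb
    change _ ∈ rpow F mul B (k + 2) ⊔ (B ⊓ Ess F mul) ∧
      _ ∈ rpow F mul B (k + 2) ⊔ (B ⊓ Ess F mul)
    obtain ⟨u, hu, v, hv, rfl⟩ := Submodule.mem_sup.1 hb
    have hvl := aux_Ess_ideal mul x v hv.2
    have hvB := hB x v hv.1
    have huB := hB x u (aux_rpow_le mul hbil hleib B hB (k + 1) hu)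
    have hur := aux_rpow_right mul hbil hleib B hB (k + 1) x u hu
    have he := aux_Ess_anti mul hbil x u
    constructor
    · rw [hbil.2.1]
      refine Submodule.add_mem _ ?_ (Submodule.mem_sup_right ⟨hvB.1, hvl.1⟩)
      have e : mul x u = (mul x u + mul u x) - mul u x := by abel
      rw [e]
      exact Submodule.sub_mem _
        (Submodule.mem_sup_right ⟨Submodule.add_mem _ huB.1 huB.2, he⟩)
        (Submodule.mem_sup_left hur)
    · rw [hbil.1]
      exact Submodule.add_mem _ (Submodule.mem_sup_left hur)
        (Submodule.mem_sup_right ⟨hvB.2, hvl.2⟩)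
end

section
/- Let L be a right Leibniz algebra over a field of characteristic ≠ 2, let m ≥ 2 be an integer, let a_1, …, a_m ∈ L, and let Q_0 ∈ L. Define the right-normed products P_i = a_m a_{m−1} ⋯ a_{i+1} for 1 ≤ i ≤ m−1 (so P_i = ((…(a_m a_{m−1})…)a_{i+2})a_{i+1}), with P_0 = a_m a_{m−1} ⋯ a_1, and define recursively Q_i = −Q_{i−1} a_i for 1 ≤ i ≤ m−1. Then Q_0 · P_0 = Σ_{i=1}^{m−1} (Q_{i−1} P_i) a_i + Q_{m−1} a_m. -/
open Classical

/-- `Q₀ P₀ = Σ_{i=1}^{m-1} (Q_{i-1} P_i) a_i + Q_{m-1} a_m`,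
where `P_{m-1} = a_m`, `P_i = P_{i+1} a_{i+1}` and `Q_i = -Q_{i-1} a_i`. -/
theorem rightProd_expansion
    {F : Type*} [Field F] {L : Type*} [AddCommGroup L] [Module F L]
    (h2 : (2 : F) ≠ 0) (mul : L → L → L)
    (hbil : IsBilin F mul) (hleib : IsRightLeibniz mul)
    (m : ℕ) (hm : 2 ≤ m) (a : ℕ → L) (P Q : ℕ → L)
    (hPtop : P (m - 1) = a m)
    (hPrec : ∀ i, i < m - 1 → P i = mul (P (i + 1)) (a (i + 1)))
    (hQrec : ∀ i, 1 ≤ i → i ≤ m - 1 → Q i = - mul (Q (i - 1)) (a i)) :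
    mul (Q 0) (P 0) =
      (∑ i ∈ Finset.Icc 1 (m - 1), mul (mul (Q (i - 1)) (P i)) (a i)) +
        mul (Q (m - 1)) (a m) := by
  have hneg : ∀ x y : L, mul (-x) y = - mul x y := by
    intro x y
    have := hbil.2.2.1 (-1) x y
    simpa using this
  have key : ∀ k, k ≤ m - 1 → mul (Q 0) (P 0) =
      (∑ i ∈ Finset.Icc 1 k, mul (mul (Q (i - 1)) (P i)) (a i)) + mul (Q k) (P k) := by
    intro k
    induction k with
    | zero => intro _; simp
    | succ k ih =>
      intro hk
      rw [ih (by omega), Finset.sum_Icc_succ_top (by omega), hPrec k (by omega), hleib,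
        hQrec (k + 1) (by omega) hk, hneg]
      simp only [Nat.add_sub_cancel]
      abel
  rw [key (m - 1) le_rfl, hPtop]
end

section
/- Let L be a right Leibniz algebra over a field of characteristic ≠ 2 and B a two-sided ideal of L. Then every product of m elements of L, parenthesized in an arbitrary way, at least n of whose factors belong to B, is a linear combination of right-normed products of length m each having at least n factors in B (the factors of each right-normed product being a permutation of the factors of the original product). -/
open Classical

theorem aux_rightProd_append {L : Type*} (mul : L → L → L) (l l' : List L) :
    ∀ a : L, rightProd mul (rightProd mul a l) l' = rightProd mul a (l ++ l') := by
  induction l with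
  | nil => intro a; rfl
  | cons b l ih => intro a; exact ih (mul a b)

theorem aux_span_mul {F : Type*} [Field F] {L : Type*} [AddCommGroup L] [Module F L]
    (mul : L → L → L) (hbil : IsBilin F mul) (S : Set L) (T : Submodule F L) (y z : L)
    (hz : z ∈ Submodule.span F S) (h : ∀ x ∈ S, mul x y ∈ T) : mul z y ∈ T := by
  obtain ⟨h1, -, h3, -⟩ := hbil
  induction hz using Submodule.span_induction with
  | mem x hx => exact h x hx
  | zero =>
    have := h3 0 0 y
    rw [zero_smul, zero_smul] at this
    rw [this]; exact T.zero_mem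
  | add a b _ _ ha hb => rw [h1]; exact T.add_mem ha hb
  | smul r a _ ha => rw [h3]; exact T.smul_mem r ha

theorem aux_mul_eval {F : Type*} [Field F] {L : Type*} [AddCommGroup L] [Module F L]
    (mul : L → L → L) (hbil : IsBilin F mul) (hleib : IsRightLeibniz mul) (t : PTree L) :
    ∀ x : L, mul x (PTree.eval mul t) ∈
      Submodule.span F {y : L | ∃ l : List L, l.Perm (PTree.leaves t) ∧
        y = rightProd mul x l} := by
  induction t with
  | leaf a => intro x; exact Submodule.subset_span ⟨[a], List.Perm.refl _, rfl⟩
  | node s t ihs iht =>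
    intro x
    have key : mul x (PTree.eval mul (PTree.node s t)) =
        mul (mul x (PTree.eval mul s)) (PTree.eval mul t) -
        mul (mul x (PTree.eval mul t)) (PTree.eval mul s) := hleib _ _ _
    rw [key]
    refine Submodule.sub_mem _ ?_ ?_
    · refine aux_span_mul mul hbil _ _ _ _ (ihs x) ?_
      rintro _ ⟨l, hl, rfl⟩
      refine Submodule.span_mono ?_ (iht (rightProd mul x l))
      rintro _ ⟨l', hl', rfl⟩
      exact ⟨l ++ l', hl.append hl', aux_rightProd_append mul l l' x⟩
    · refine aux_span_mul mul hbil _ _ _ _ (iht x) ?_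
      rintro _ ⟨l, hl, rfl⟩
      refine Submodule.span_mono ?_ (ihs (rightProd mul x l))
      rintro _ ⟨l', hl', rfl⟩
      exact ⟨l ++ l', (hl.append hl').trans List.perm_append_comm,
        aux_rightProd_append mul l l' x⟩

theorem aux_eval {F : Type*} [Field F] {L : Type*} [AddCommGroup L] [Module F L]
    (mul : L → L → L) (hbil : IsBilin F mul) (hleib : IsRightLeibniz mul) (t : PTree L) :
    PTree.eval mul t ∈
      Submodule.span F {y : L | ∃ (a : L) (l : List L), (a :: l).Perm (PTree.leaves t) ∧
        y = rightProd mul a l} := by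
  induction t with
  | leaf a => exact Submodule.subset_span ⟨a, [], List.Perm.refl _, rfl⟩
  | node s t ihs _ =>
    refine aux_span_mul mul hbil _ _ _ _ ihs ?_
    rintro _ ⟨a, l, hl, rfl⟩
    refine Submodule.span_mono ?_ (aux_mul_eval mul hbil hleib t (rightProd mul a l))
    rintro _ ⟨l', hl', rfl⟩
    exact ⟨a, l ++ l', hl.append hl', aux_rightProd_append mul l l' a⟩

/-- Every product of `m` elements of `L`, at least `n` of whose
factors lie in the ideal `B`, is a linear combination of right-normed products
whose factors are a permutation of the original ones (hence with at least `n`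
factors in `B`). -/
theorem product_is_comb_of_rightProds_weight
    {F : Type*} [Field F] {L : Type*} [AddCommGroup L] [Module F L]
    (h2 : (2 : F) ≠ 0) (mul : L → L → L)
    (hbil : IsBilin F mul) (hleib : IsRightLeibniz mul)
    (B : Submodule F L) (hB : IsIdeal mul B) (n : ℕ) :
    ∀ t : PTree L, n ≤ PTree.weight B t →
      PTree.eval mul t ∈
        Submodule.span F {x : L | ∃ (a : L) (l : List L),
          (a :: l).Perm (PTree.leaves t) ∧
          n ≤ (a :: l).countP (fun y => decide (y ∈ B)) ∧
          x = rightProd mul a l} := by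
  intro t ht
  refine Submodule.span_mono ?_ (aux_eval mul hbil hleib t)
  rintro _ ⟨a, l, hl, rfl⟩
  exact ⟨a, l, hl, by rw [hl.countP_eq]; exact ht, rfl⟩
end

section
/- Let L be a right Leibniz algebra over a field of characteristic ≠ 2 and B ≠ {0} a two-sided ideal of L. Let P = a_m a_{m−1} ⋯ a_1 be a right-normed product of m elements of L of which at least n ≥ 1 belong to B. Then P belongs to B^n + Es(B), where B^n is the n-th right power of B and Es(B) = B ∩ Ess(L). -/
open Classical

theorem aux_mul_mem_s9 {F : Type*} [Field F] {L : Type*} [AddCommGroup L] [Module F L]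
    (mul : L → L → L) (B : Submodule F L) (hB : IsIdeal mul B) (n : ℕ) (x y : L)
    (hx : x ∈ rpow F mul B n) (hy : y ∈ B) : mul x y ∈ rpow F mul B (n + 1) := by
  cases n with
  | zero => exact (hB x y hy).1
  | succ n => exact Submodule.subset_span ⟨x, hx, y, hy, rfl⟩

theorem aux_right {F : Type*} [Field F] {L : Type*} [AddCommGroup L] [Module F L]
    (mul : L → L → L) (hbil : IsBilin F mul) (hleib : IsRightLeibniz mul)
    (B : Submodule F L) (hB : IsIdeal mul B) (n : ℕ) : ∀ (x y : L),
    x ∈ rpow F mul B n → mul x y ∈ rpow F mul B n := by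
  induction n with
  | zero => intro x y _; exact Submodule.mem_top
  | succ n ih =>
    cases n with
    | zero => intro x y hx; exact (hB y x hx).2
    | succ n =>
      intro x y hx
      change x ∈ Submodule.span F _ at hx
      induction hx using Submodule.span_induction with
      | mem x hx =>
        obtain ⟨b, hb, c, hc, rfl⟩ := hx
        have h : mul (mul b c) y = mul b (mul c y) + mul (mul b y) c := by
          rw [hleib b c y]; abel
        rw [h]
        exact add_mem (aux_mul_mem_s9 mul B hB _ _ _ hb (hB y c hc).2)
          (aux_mul_mem_s9 mul B hB _ _ _ (ih b y hb) hc)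
      | zero =>
        have h : mul 0 y = 0 := by simpa using hbil.2.2.1 0 0 y
        rw [h]; exact zero_mem _
      | add u v _ _ hu hv => rw [hbil.1]; exact add_mem hu hv
      | smul r u _ hu => rw [hbil.2.2.1]; exact Submodule.smul_mem _ _ hu

theorem aux_anti {F : Type*} [Field F] {L : Type*} [AddCommGroup L] [Module F L]
    (mul : L → L → L) (hbil : IsBilin F mul) (hleib : IsRightLeibniz mul)
    (B : Submodule F L) (hB : IsIdeal mul B) : Antitone (rpow F mul B) := by
  apply antitone_nat_of_succ_le
  intro n
  cases n with
  | zero => exact le_top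
  | succ n =>
    refine Submodule.span_le.2 ?_
    rintro x ⟨b, hb, c, _, rfl⟩
    exact aux_right mul hbil hleib B hB _ _ _ hb

theorem aux_prod {F : Type*} [Field F] {L : Type*} [AddCommGroup L] [Module F L]
    (mul : L → L → L) (hbil : IsBilin F mul) (hleib : IsRightLeibniz mul)
    (B : Submodule F L) (hB : IsIdeal mul B) (l : List L) : ∀ (k : ℕ) (x : L),
    x ∈ rpow F mul B k →
    rightProd mul x l ∈ rpow F mul B (k + l.countP (fun y => decide (y ∈ B))) := by
  induction l with
  | nil => intro k x hx; simpa [rightProd] using hx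
  | cons b l ih =>
    intro k x hx
    by_cases hb : b ∈ B
    · have := ih (k + 1) _ (aux_mul_mem_s9 mul B hB k x b hx hb)
      rw [List.countP_cons_of_pos (by simpa using hb), add_comm (List.countP _ _) 1, ← add_assoc]
      exact this
    · have := ih k _ (aux_right mul hbil hleib B hB k x b hx)
      rw [List.countP_cons_of_neg (by simpa using hb)]
      exact this

/-- A right-normed product with at least `n ≥ 1` factors in the
nonzero ideal `B` belongs to `B^n + Es(B)`. -/
theorem rightProd_mem_rpow_sup_Es
    {F : Type*} [Field F] {L : Type*} [AddCommGroup L] [Module F L]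
    (h2 : (2 : F) ≠ 0) (mul : L → L → L)
    (hbil : IsBilin F mul) (hleib : IsRightLeibniz mul)
    (B : Submodule F L) (hB : IsIdeal mul B) (hBne : B ≠ ⊥)
    (n : ℕ) (hn : 1 ≤ n) (a : L) (l : List L)
    (hw : n ≤ (a :: l).countP (fun y => decide (y ∈ B))) :
    rightProd mul a l ∈ rpow F mul B n ⊔ (B ⊓ Ess F mul) := by
  refine Submodule.mem_sup_left ?_
  refine aux_anti mul hbil hleib B hB hw ?_
  by_cases ha : a ∈ B
  · rw [List.countP_cons_of_pos (by simpa using ha), add_comm]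
    exact aux_prod mul hbil hleib B hB l 1 a ha
  · rw [List.countP_cons_of_neg (by simpa using ha)]
    have := aux_prod mul hbil hleib B hB l 0 a Submodule.mem_top
    rwa [zero_add] at this
end

section
/- Let k, ℓ be integers with 1 ≤ k ≤ ℓ, let L be a right Leibniz algebra over a field of characteristic ≠ 2, and let B be a two-sided ideal of L that is Es_k-right nil (i.e. Es(B)_{(L,k)} = 0). Then every right-normed product P = a_m a_{m−1} ⋯ a_1 of elements of L having at least 2ℓ factors in B belongs to (B^ℓ)_{(L,k)}, the span of right-normed products d a_k ⋯ a_1 with d ∈ B^ℓ and a_1, …, a_k ∈ L. -/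
open Classical

theorem rp_append {L : Type*} (mul : L → L → L) (l : List L) (a c : L) :
    rightProd mul a (l ++ [c]) = mul (rightProd mul a l) c := by
  induction l generalizing a with
  | nil => rfl
  | cons b l ih => exact ih (mul a b)

theorem map_span_right {F : Type*} [Field F] {L : Type*} [AddCommGroup L] [Module F L]
    {mul : L → L → L} (hbil : IsBilin F mul) (S : Set L) (T : Submodule F L) (c : L)
    (h : ∀ x ∈ S, mul x c ∈ T) (x : L) (hx : x ∈ Submodule.span F S) : mul x c ∈ T := by
  have h0 : mul 0 c = 0 := by simpa using hbil.2.2.1 0 0 c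
  induction hx using Submodule.span_induction with
  | mem x hx => exact h x hx
  | zero => rw [h0]; exact T.zero_mem
  | add x y _ _ hx hy => rw [hbil.1]; exact T.add_mem hx hy
  | smul r x _ hx => rw [hbil.2.2.1]; exact T.smul_mem r hx

theorem rpow_mul_L {F : Type*} [Field F] {L : Type*} [AddCommGroup L] [Module F L]
    {mul : L → L → L} (hbil : IsBilin F mul) (hleib : IsRightLeibniz mul)
    {B : Submodule F L} (hB : IsIdeal mul B) (n : ℕ) (b x : L)
    (hb : b ∈ rpow F mul B n) : mul b x ∈ rpow F mul B n := by
  induction n generalizing b x with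
  | zero => exact Submodule.mem_top
  | succ n ih =>
    cases n with
    | zero => exact (hB x b hb).2
    | succ n =>
      refine map_span_right hbil _ (rpow F mul B (n + 2)) x ?_ b hb
      rintro _ ⟨b, hb, c, hc, rfl⟩
      have e : mul (mul b c) x = mul (mul b x) c + mul b (mul c x) := by
        rw [hleib b c x]; abel
      rw [e]
      exact Submodule.add_mem _
        (Submodule.subset_span ⟨_, ih b x hb, c, hc, rfl⟩)
        (Submodule.subset_span ⟨b, hb, _, (hB x c hc).2, rfl⟩)

theorem rpow_mul_B {F : Type*} [Field F] {L : Type*} [AddCommGroup L] [Module F L]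
    {mul : L → L → L} {B : Submodule F L} (hB : IsIdeal mul B) (n : ℕ) (b c : L)
    (hb : b ∈ rpow F mul B n) (hc : c ∈ B) : mul b c ∈ rpow F mul B (n + 1) := by
  cases n with
  | zero => exact (hB b c hc).1
  | succ n => exact Submodule.subset_span ⟨b, hb, c, hc, rfl⟩

theorem rpow_anti {F : Type*} [Field F] {L : Type*} [AddCommGroup L] [Module F L]
    {mul : L → L → L} (hbil : IsBilin F mul) (hleib : IsRightLeibniz mul)
    {B : Submodule F L} (hB : IsIdeal mul B) : Antitone (rpow F mul B) := by
  refine antitone_nat_of_succ_le fun n => ?_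
  cases n with
  | zero => exact le_top
  | succ n =>
    refine Submodule.span_le.2 ?_
    rintro _ ⟨b, hb, c, hc, rfl⟩
    exact rpow_mul_L hbil hleib hB _ b c hb

theorem rightProd_mem_rpow {F : Type*} [Field F] {L : Type*} [AddCommGroup L] [Module F L]
    {mul : L → L → L} (hbil : IsBilin F mul) (hleib : IsRightLeibniz mul)
    {B : Submodule F L} (hB : IsIdeal mul B) (s : List L) (n : ℕ) (a : L)
    (ha : a ∈ rpow F mul B n) :
    rightProd mul a s ∈ rpow F mul B (n + s.countP (fun y => decide (y ∈ B))) := by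
  induction s generalizing a n with
  | nil => simpa [rightProd] using ha
  | cons b s ih =>
    by_cases hb : b ∈ B
    · have := ih (n + 1) (mul a b) (rpow_mul_B hB n a b ha hb)
      rw [List.countP_cons_of_pos (by simpa using hb), add_comm (List.countP _ s) 1, ← add_assoc]
      exact this
    · have := ih n (mul a b) (rpow_mul_L hbil hleib hB n a b ha)
      rw [List.countP_cons_of_neg (by simpa using hb)]
      exact this

theorem rpow_le_rms {F : Type*} [Field F] {L : Type*} [AddCommGroup L] [Module F L]
    {mul : L → L → L} (hbil : IsBilin F mul) (B : Submodule F L) (n k : ℕ) :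
    rpow F mul B (n + 1 + k) ≤ rightMulSpan F mul (rpow F mul B (n + 1)) k := by
  induction k with
  | zero => exact fun x hx => Submodule.subset_span ⟨x, hx, [], rfl, rfl⟩
  | succ k ih =>
    have e : n + 1 + (k + 1) = (n + k) + 2 := by omega
    have e' : n + 1 + k = (n + k) + 1 := by omega
    rw [e]
    rw [e'] at ih
    refine Submodule.span_le.2 ?_
    rintro _ ⟨b, hb, c, hc, rfl⟩
    refine map_span_right hbil _ (rightMulSpan F mul (rpow F mul B (n + 1)) (k + 1)) c ?_ b (ih hb)
    rintro _ ⟨d, hd, l, hl, rfl⟩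
    exact Submodule.subset_span ⟨d, hd, l ++ [c], by simp [hl], (rp_append mul l d c).symm⟩

/-- If `B` is `Es_k`-right nil and `1 ≤ k ≤ ℓ`, every right-normed
product with at least `2ℓ` factors in `B` belongs to `(B^ℓ)_{(L,k)}`. -/
theorem rightProd_mem_rightMulSpan
    {F : Type*} [Field F] {L : Type*} [AddCommGroup L] [Module F L]
    (h2 : (2 : F) ≠ 0) (mul : L → L → L)
    (hbil : IsBilin F mul) (hleib : IsRightLeibniz mul)
    (k l : ℕ) (hk : 1 ≤ k) (hkl : k ≤ l)
    (B : Submodule F L) (hB : IsIdeal mul B)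
    (hnil : rightMulSpan F mul (B ⊓ Ess F mul) k = ⊥)
    (a : L) (s : List L)
    (hw : 2 * l ≤ (a :: s).countP (fun y => decide (y ∈ B))) :
    rightProd mul a s ∈ rightMulSpan F mul (rpow F mul B l) k := by
  obtain ⟨n, rfl⟩ : ∃ n, l = n + 1 := ⟨l - 1, by omega⟩
  refine rpow_le_rms hbil B n k (rpow_anti hbil hleib hB (show n + 1 + k ≤ 2 * (n + 1) by omega) ?_)
  refine rpow_anti hbil hleib hB hw ?_
  by_cases ha : a ∈ B
  · have := rightProd_mem_rpow hbil hleib hB s 1 a ha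
    rw [List.countP_cons_of_pos (by simpa using ha), add_comm]
    exact this
  · have := rightProd_mem_rpow hbil hleib hB s 0 a Submodule.mem_top
    rw [List.countP_cons_of_neg (by simpa using ha)]
    simpa using this
end

section
/- Let L be a right Leibniz algebra over a field of characteristic ≠ 2 and B a two-sided ideal of L that is Es_{k'}-right nil for some integer k' ≥ 1. If B is right nilpotent (B^{ℓ'} = 0 for some ℓ' ≥ 1), then B is strongly nilpotent (B^{⟨ℓ⟩} = 0 for some ℓ ≥ 1). -/
open Classical

theorem rpow_mul_aux {F : Type*} [Field F] {L : Type*} [AddCommGroup L] [Module F L]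
    (mul : L → L → L) (B : Submodule F L) (hB : IsIdeal mul B)
    (n : ℕ) (y c : L) (hy : y ∈ rpow F mul B n) (hc : c ∈ B) :
    mul y c ∈ rpow F mul B (n + 1) := by
  cases n with
  | zero => exact (hB y c hc).1
  | succ m => exact Submodule.subset_span ⟨y, hy, c, hc, rfl⟩

theorem rpow_right_aux {F : Type*} [Field F] {L : Type*} [AddCommGroup L] [Module F L]
    (mul : L → L → L) (hbil : IsBilin F mul) (hleib : IsRightLeibniz mul)
    (B : Submodule F L) (hB : IsIdeal mul B) (x : L) :
    ∀ (n : ℕ) (y : L), y ∈ rpow F mul B n → mul y x ∈ rpow F mul B n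
  | 0, y, _ => Submodule.mem_top
  | 1, y, hy => (hB x y hy).2
  | n + 2, y, hy => by
    have ih := rpow_right_aux mul hbil hleib B hB x (n + 1)
    obtain ⟨h1, h2, h3, h4⟩ := hbil
    change y ∈ Submodule.span F _ at hy
    induction hy using Submodule.span_induction with
    | mem y h =>
      obtain ⟨b, hb, c, hc, rfl⟩ := h
      have e : mul (mul b c) x = mul b (mul c x) + mul (mul b x) c := by
        rw [hleib b c x]; abel
      rw [e]
      exact add_mem (rpow_mul_aux mul B hB (n + 1) _ _ hb (hB x c hc).2)
        (rpow_mul_aux mul B hB (n + 1) _ _ (ih b hb) hc)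
    | zero =>
      have e : mul 0 x = 0 := by simpa using h3 0 0 x
      rw [e]; exact zero_mem _
    | add a b _ _ ha hb => rw [h1]; exact add_mem ha hb
    | smul r a _ ha => rw [h3]; exact Submodule.smul_mem _ _ ha

theorem rpow_tree_aux {F : Type*} [Field F] {L : Type*} [AddCommGroup L] [Module F L]
    (mul : L → L → L) (hbil : IsBilin F mul) (hleib : IsRightLeibniz mul)
    (B : Submodule F L) (hB : IsIdeal mul B) (t : PTree L) :
    ∀ (n : ℕ) (y : L), y ∈ rpow F mul B n →
      mul y (t.eval mul) ∈ rpow F mul B (n + t.weight B) := by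
  induction t with
  | leaf a =>
    intro n y hy
    by_cases ha : a ∈ B
    · simpa [PTree.weight, PTree.leaves, PTree.eval, ha] using rpow_mul_aux mul B hB n y a hy ha
    · simpa [PTree.weight, PTree.leaves, PTree.eval, ha] using
        rpow_right_aux mul hbil hleib B hB a n y hy
  | node s t hs ht =>
    intro n y hy
    have e : (PTree.node s t).weight B = s.weight B + t.weight B := by
      simp [PTree.weight, PTree.leaves, List.countP_append]
    rw [e, PTree.eval, hleib]
    refine sub_mem ?_ ?_
    · rw [← add_assoc]; exact ht _ _ (hs _ _ hy)
    · rw [add_comm (s.weight B), ← add_assoc]; exact hs _ _ (ht _ _ hy)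

theorem rpow_eval_aux {F : Type*} [Field F] {L : Type*} [AddCommGroup L] [Module F L]
    (mul : L → L → L) (hbil : IsBilin F mul) (hleib : IsRightLeibniz mul)
    (B : Submodule F L) (hB : IsIdeal mul B) (t : PTree L) :
    t.eval mul ∈ rpow F mul B (t.weight B) := by
  induction t with
  | leaf a =>
    by_cases ha : a ∈ B
    · simpa [PTree.weight, PTree.leaves, PTree.eval, ha, rpow] using ha
    · simp [PTree.weight, PTree.leaves, PTree.eval, ha, rpow]
  | node s t hs ht =>
    have e : (PTree.node s t).weight B = s.weight B + t.weight B := by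
      simp [PTree.weight, PTree.leaves, List.countP_append]
    rw [e, PTree.eval]
    exact rpow_tree_aux mul hbil hleib B hB t _ _ hs

theorem rpow_bot_aux {F : Type*} [Field F] {L : Type*} [AddCommGroup L] [Module F L]
    (mul : L → L → L) (hbil : IsBilin F mul) (B : Submodule F L)
    (l : ℕ) (hl : 1 ≤ l) (h : rpow F mul B l = ⊥) (n : ℕ) (hn : l ≤ n) :
    rpow F mul B n = ⊥ := by
  induction n, hn using Nat.le_induction with
  | base => exact h
  | succ n hn ih =>
    obtain ⟨m, rfl⟩ : ∃ m, n = m + 1 := ⟨n - 1, by omega⟩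
    change Submodule.span F _ = ⊥
    rw [Submodule.span_eq_bot]
    rintro x ⟨b, hb, c, hc, rfl⟩
    rw [ih, Submodule.mem_bot] at hb
    subst hb
    simpa using hbil.2.2.1 0 0 c

/-- An `Es_{k'}`-right nil ideal that is right nilpotent is
strongly nilpotent. -/
theorem right_nilpotent_ideal_strongly_nilpotent
    {F : Type*} [Field F] {L : Type*} [AddCommGroup L] [Module F L]
    (h2 : (2 : F) ≠ 0) (mul : L → L → L)
    (hbil : IsBilin F mul) (hleib : IsRightLeibniz mul)
    (B : Submodule F L) (hB : IsIdeal mul B)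
    (k' : ℕ) (hk' : 1 ≤ k')
    (hnil : rightMulSpan F mul (B ⊓ Ess F mul) k' = ⊥)
    (hrnil : ∃ l', 1 ≤ l' ∧ rpow F mul B l' = ⊥) :
    ∃ l, 1 ≤ l ∧ weightSpan F mul B l = ⊥ := by
  obtain ⟨l, hl, h⟩ := hrnil
  refine ⟨l, hl, ?_⟩
  change Submodule.span F _ = ⊥
  rw [Submodule.span_eq_bot]
  rintro x ⟨t, ht, rfl⟩
  have := rpow_eval_aux mul hbil hleib B hB t
  rwa [rpow_bot_aux mul hbil B l hl h _ ht, Submodule.mem_bot] at this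
end

section
/- Let L be a right Leibniz algebra over a field of characteristic ≠ 2 and B a two-sided ideal of L that is Es_{k'}-right nil for some integer k' ≥ 1, with B^{ℓ'} = 0 for some integer ℓ' ≥ 1. Set k = max(k', ℓ'). Then B^{⟨4k² − 2k + 1⟩} = 0; that is, every product of elements of L having at least 4k² − 2k + 1 factors in B is zero. -/
open Classical

section helpers

variable {F : Type*} [Field F] {L : Type*} [AddCommGroup L] [Module F L]
  {mul : L → L → L} {B : Submodule F L}

lemma mul_mem_of_span (hbil : IsBilin F mul) (a : L) (S : Set L) (P : Submodule F L)
    (h : ∀ x ∈ S, mul a x ∈ P) (x : L) (hx : x ∈ Submodule.span F S) : mul a x ∈ P := by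
  induction hx using Submodule.span_induction with
  | mem x hx => exact h x hx
  | zero =>
    have := hbil.2.2.2 0 a 0
    rw [zero_smul, zero_smul] at this
    rw [this]; exact P.zero_mem
  | add x y _ _ hx hy => rw [hbil.2.1]; exact P.add_mem hx hy
  | smul r x _ hx => rw [hbil.2.2.2]; exact P.smul_mem _ hx

lemma span_mul_mem (hbil : IsBilin F mul) (a : L) (S : Set L) (P : Submodule F L)
    (h : ∀ x ∈ S, mul x a ∈ P) (x : L) (hx : x ∈ Submodule.span F S) : mul x a ∈ P := by
  induction hx using Submodule.span_induction with
  | mem x hx => exact h x hx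
  | zero =>
    have := hbil.2.2.1 0 0 a
    rw [zero_smul, zero_smul] at this
    rw [this]; exact P.zero_mem
  | add x y _ _ hx hy => rw [hbil.1]; exact P.add_mem hx hy
  | smul r x _ hx => rw [hbil.2.2.1]; exact P.smul_mem _ hx

lemma rpow_step (n : ℕ) (b c : L) (hb : b ∈ rpow F mul B (n + 1)) (hc : c ∈ B) :
    mul b c ∈ rpow F mul B (n + 2) := by
  rw [rpow]
  exact Submodule.subset_span ⟨b, hb, c, hc, rfl⟩

lemma rpow_mul_right (hbil : IsBilin F mul) (hleib : IsRightLeibniz mul)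
    (hB : IsIdeal mul B) (n : ℕ) :
    ∀ a ∈ rpow F mul B n, ∀ x, mul a x ∈ rpow F mul B n := by
  induction n with
  | zero => intro a _ x; simp [rpow]
  | succ n ih =>
    cases n with
    | zero => intro a ha x; simp only [zero_add, rpow] at *; exact (hB x a ha).2
    | succ n =>
      intro a ha x
      have ha' := ha
      rw [rpow] at ha'
      refine span_mul_mem hbil x _ _ ?_ a ha'
      rintro _ ⟨b, hb, c, hc, rfl⟩
      have h : mul (mul b c) x = mul b (mul c x) + mul (mul b x) c := by
        rw [hleib b c x]; abel
      rw [h]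
      exact Submodule.add_mem _ (rpow_step n _ _ hb (hB x c hc).2)
        (rpow_step n _ _ (ih b hb x) hc)

/-- `B^{n+1} ≤ B^n`. -/
lemma rpow_succ_le (hbil : IsBilin F mul) (hleib : IsRightLeibniz mul)
    (hB : IsIdeal mul B) (n : ℕ) : rpow F mul B (n + 1) ≤ rpow F mul B n := by
  cases n with
  | zero => simp [rpow]
  | succ n =>
    rw [rpow, Submodule.span_le]
    rintro _ ⟨b, hb, c, hc, rfl⟩
    exact rpow_mul_right hbil hleib hB _ b hb c

lemma rpow_mul_mem_succ (hB : IsIdeal mul B) (i : ℕ) (a c : L)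
    (ha : a ∈ rpow F mul B i) (hc : c ∈ B) : mul a c ∈ rpow F mul B (i + 1) := by
  cases i with
  | zero => simp only [zero_add, rpow]; exact (hB a c hc).1
  | succ i => exact rpow_step i a c ha hc

/-- `B^i B^j ≤ B^{i+j}`. -/
lemma rpow_mul_rpow (hbil : IsBilin F mul) (hleib : IsRightLeibniz mul)
    (hB : IsIdeal mul B) (j : ℕ) : ∀ i, ∀ a ∈ rpow F mul B i, ∀ b ∈ rpow F mul B j,
      mul a b ∈ rpow F mul B (i + j) := by
  induction j with
  | zero => intro i a ha b _; exact rpow_mul_right hbil hleib hB i a ha b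
  | succ j ih =>
    cases j with
    | zero =>
      intro i a ha b hb
      simp only [zero_add, rpow] at hb
      exact rpow_mul_mem_succ hB i a b ha hb
    | succ j =>
      intro i a ha b hb
      rw [rpow] at hb
      refine mul_mem_of_span hbil a _ _ ?_ b hb
      rintro _ ⟨b, hb, c, hc, rfl⟩
      rw [hleib a b c]
      refine Submodule.sub_mem _ (rpow_mul_mem_succ hB (i + (j + 1)) _ _ (ih i a ha b hb) hc) ?_
      have := ih (i + 1) _ (rpow_mul_mem_succ hB i a c ha hc) b hb
      rwa [show i + 1 + (j + 1) = i + (j + 1 + 1) by omega] at this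

/-- A product of weight `m` lies in `B^m`. -/
lemma eval_mem_rpow (hbil : IsBilin F mul) (hleib : IsRightLeibniz mul)
    (hB : IsIdeal mul B) (t : PTree L) :
    PTree.eval mul t ∈ rpow F mul B (PTree.weight B t) := by
  induction t with
  | leaf a =>
    by_cases ha : a ∈ B
    · simpa [PTree.eval, PTree.weight, PTree.leaves, ha, rpow] using ha
    · simp [PTree.eval, PTree.weight, PTree.leaves, ha, rpow]
  | node s t hs ht =>
    have : PTree.weight B (PTree.node s t) = PTree.weight B s + PTree.weight B t := by
      simp [PTree.weight, PTree.leaves, List.countP_append]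
    rw [this]
    exact rpow_mul_rpow hbil hleib hB _ _ _ hs _ ht

end helpers

/-- If `B` is `Es_{k'}`-right nil and `B^{ℓ'} = 0`, then with
`k = max k' ℓ'` one has `B^{⟨4k² - 2k + 1⟩} = 0`. -/
theorem weightSpan_eq_bot_of_right_nilpotent
    {F : Type*} [Field F] {L : Type*} [AddCommGroup L] [Module F L]
    (h2 : (2 : F) ≠ 0) (mul : L → L → L)
    (hbil : IsBilin F mul) (hleib : IsRightLeibniz mul)
    (B : Submodule F L) (hB : IsIdeal mul B)
    (k' l' : ℕ) (hk' : 1 ≤ k') (hl' : 1 ≤ l')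
    (hnil : rightMulSpan F mul (B ⊓ Ess F mul) k' = ⊥)
    (hrnil : rpow F mul B l' = ⊥) :
    weightSpan F mul B (4 * (max k' l') ^ 2 - 2 * (max k' l') + 1) = ⊥ := by
  have hanti : Antitone (rpow F mul B) :=
    antitone_nat_of_succ_le (rpow_succ_le hbil hleib hB)
  rw [eq_bot_iff, weightSpan, Submodule.span_le]
  rintro _ ⟨t, ht, rfl⟩
  have hle : l' ≤ PTree.weight B t := by
    refine le_trans ?_ ht
    have h1 : l' ≤ max k' l' := le_max_right _ _
    generalize max k' l' = k at *
    have h3 : k ≤ k ^ 2 := Nat.le_self_pow (by norm_num) k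
    omega
  rw [← hrnil]
  exact hanti hle (eval_mem_rpow hbil hleib hB t)
end
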